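/- arXiv:1112.6165 — 3 statements merged into one kernel-verified Lean document; each statement's English description precedes it below -/
import Mathlib

section
/- Assume that for every p ∈ Ω the vectors X(p), Y(p), [X,Y](p) form a basis of ℝ³. Let f : Ω → ℝ be smooth and everywhere positive, and let α : Ω → (ℝ³)* be the smooth 1-form determined pointwise by the three conditions ⟨α(p), X(p)⟩ = L_X(log f)(p), ⟨α(p), Y(p)⟩ = 0, ⟨α(p), [Y,X](p)⟩ = L_Y(L_X(log f))(p). Then the following are equivalent: (i) there exist smooth everywhere-positive functions g, h : Ω → ℝ with f = g·h on Ω, L_X g = 0 on Ω, and L_Y h = 0 on Ω; (ii) α is closed. -/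
/-!
The form `α` is the only candidate for `d (log h)`: if `f = g * h` with `L_X g = 0` and `L_Y h = 0`,
then `d (log h)` takes the prescribed values on `X`, on `Y`, and on `[Y,X]` (because
`⟨dφ, [Y,X]⟩ = L_Y (L_X φ) - L_X (L_Y φ)`, `fderiv_lieBracketVF`), so it equals `α` since these
vectors span `ℝ³`; hence `α` is closed by the symmetry of second derivatives.

Conversely a closed `α` on a simply connected open set has a primitive `u`
(`exists_primitive_of_closed`), and `h = exp u`, `g = f * exp (-u)` is the required factorization.
Global primitives come from local ones, which exist on balls by the Poincaré lemma for convex sets: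
two local primitives differ by a locally constant function, so the local primitives of `α` define a
covering of the domain, and a covering of a simply connected, locally path-connected space has a
section (`exists_glue_of_locally_constant_sub`).
-/

/-- The Lie bracket `[X,Y](p) = DY(p)(X(p)) − DX(p)(Y(p))` of vector fields on `ℝ³`. -/
noncomputable def lieBracketVF (X Y : (Fin 3 → ℝ) → (Fin 3 → ℝ)) (p : Fin 3 → ℝ) :
    Fin 3 → ℝ :=
  fderiv ℝ Y p (X p) - fderiv ℝ X p (Y p)

/-- The derivative of a function `φ` along a vector field `X`: `L_X φ(p) = Dφ(p)(X(p))`. -/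
noncomputable def lieDerivVF (X : (Fin 3 → ℝ) → (Fin 3 → ℝ)) (φ : (Fin 3 → ℝ) → ℝ)
    (p : Fin 3 → ℝ) : ℝ :=
  fderiv ℝ φ p (X p)

open Topology Set

/-- Gluing local functions whose differences are locally constant: on a simply connected, locally
path-connected space the locally constant cocycle `φ i - φ j` is a coboundary. The cocycle defines
a bundle with discrete fiber, i.e. a covering, and the glued function is a section of it. -/
theorem exists_glue_of_locally_constant_sub {B F : Type*} [TopologicalSpace B]
    [SimplyConnectedSpace B] [LocallyPathConnectedSpace B] [AddCommGroup F]
    (U : B → Set B) (hU : ∀ i, IsOpen (U i)) (hmem : ∀ i, i ∈ U i) (φ : B → B → F)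
    (hφ : ∀ i j, ∀ x ∈ U i ∩ U j, ∀ᶠ y in 𝓝 x, φ i y - φ j y = φ i x - φ j x) :
    ∃ u : B → F, ∀ x, ∀ᶠ y in 𝓝 x, u y = φ x y + (u x - φ x x) := by
  let _ : TopologicalSpace F := ⊥
  have : DiscreteTopology F := ⟨rfl⟩
  -- The coordinate `v` in chart `i` over `x` stands for the value `v + φ i x` at `x`.
  let Z : FiberBundleCore B B F :=
    { baseSet := U
      isOpen_baseSet := hU
      indexAt := id
      mem_baseSet_at := hmem
      coordChange := fun i j x v => v + (φ i x - φ j x)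
      coordChange_self := fun i x _ v => by simp
      continuousOn_coordChange := by
        rintro i j ⟨x, v⟩ ⟨hx, -⟩
        apply ContinuousAt.continuousWithinAt
        have hev : (fun p : B × F => p.2 + (φ i p.1 - φ j p.1)) =ᶠ[𝓝 (x, v)]
            fun p => p.2 + (φ i x - φ j x) := by
          filter_upwards [continuousAt_fst.eventually (hφ i j x hx)] with p hp
          rw [hp]
        refine ContinuousAt.congr ?_ hev.symm
        exact (continuous_of_discreteTopology
          (f := fun w : F => w + (φ i x - φ j x))).continuousAt.comp continuousAt_snd
      coordChange_comp := fun i j k x _ v => by abel }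
  have cov : IsCoveringMap (Bundle.TotalSpace.proj : Bundle.TotalSpace F Z.Fiber → B) :=
    FiberBundle.isCoveringMap
  obtain ⟨b⟩ : Nonempty B := inferInstance
  obtain ⟨s, ⟨-, hs⟩, -⟩ := cov.existsUnique_continuousMap_lifts (ContinuousMap.id B) b
    (⟨b, (0 : F)⟩ : Bundle.TotalSpace F Z.Fiber) rfl
  have hproj : ∀ x, (s x).proj = x := fun x => congrFun hs x
  -- The value represented by a point of the covering, read in the chart centered at its projection.
  let val : Bundle.TotalSpace F Z.Fiber → F := fun e => (show F from e.2) + φ e.proj e.proj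
  refine ⟨fun x => val (s x), fun x => ?_⟩
  have hcont : ContinuousAt (fun y => (Z.localTriv x (s y)).2) x := by
    refine continuousAt_snd.comp (ContinuousAt.comp ?_ s.continuous.continuousAt)
    refine (Z.localTriv x).continuousAt ?_
    rw [Bundle.Trivialization.mem_source]
    change (s x).proj ∈ U x
    rw [hproj]
    exact hmem x
  -- The coordinate of the section in a fixed chart is locally constant, the fiber being discrete.
  have hconst := hcont.eventually (p := fun w => w = (Z.localTriv x (s x)).2) (by
    rw [nhds_discrete]
    simp)
  have hcoord : ∀ y, (Z.localTriv x (s y)).2 = val (s y) - φ x y := by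
    intro y
    change (show F from (s y).2) + (φ (s y).proj (s y).proj - φ x (s y).proj) = _
    simp only [val]
    conv_rhs => rw [← congrArg (φ x) (hproj y)]
    abel
  filter_upwards [hconst] with y hy
  rw [hcoord, hcoord] at hy
  rw [← hy]
  abel

/-- The Poincaré lemma for 1-forms on a simply connected open set. -/
theorem exists_primitive_of_closed {E : Type*} [NormedAddCommGroup E] [NormedSpace ℝ E]
    {Ω : Set E} (hΩ : IsOpen Ω) (hΩsc : SimplyConnectedSpace Ω) {α : E → E →L[ℝ] ℝ}
    (hα : DifferentiableOn ℝ α Ω)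
    (hclosed : ∀ p ∈ Ω, ∀ u w : E, fderiv ℝ α p u w = fderiv ℝ α p w u) :
    ∃ u : E → ℝ, ∀ p ∈ Ω, HasFDerivAt u (α p) p := by
  have := hΩ.locallyPathConnectedSpace
  have hball : ∀ x : Ω, ∃ r > 0, Metric.ball (x : E) r ⊆ Ω := fun x =>
    Metric.isOpen_iff.1 hΩ x x.2
  choose r hr hrΩ using hball
  have hloc : ∀ x : Ω, ∃ φ : E → ℝ, ∀ a ∈ Metric.ball (x : E) (r x), HasFDerivAt φ (α a) a :=
    fun x => (convex_ball _ _).exists_forall_hasFDerivAt_of_fderiv_symmetric Metric.isOpen_ball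
      (hα.mono (hrΩ x)) fun a ha => hclosed a (hrΩ x ha)
  choose φ hφ using hloc
  obtain ⟨u, hu⟩ := exists_glue_of_locally_constant_sub (B := Ω) (F := ℝ)
    (fun x => Subtype.val ⁻¹' Metric.ball (x : E) (r x))
    (fun x => Metric.isOpen_ball.preimage continuous_subtype_val)
    (fun x => Metric.mem_ball_self (hr x)) (fun x y => φ x y) (by
      rintro i j x ⟨hi, hj⟩
      have hopen : IsOpen (Metric.ball (i : E) (r i) ∩ Metric.ball (j : E) (r j)) :=
        Metric.isOpen_ball.inter Metric.isOpen_ball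
      have hder : ∀ a ∈ Metric.ball (i : E) (r i) ∩ Metric.ball (j : E) (r j),
          HasFDerivAt (fun y => φ i y - φ j y) (0 : E →L[ℝ] ℝ) a := fun a ha => by
        simpa using (hφ i a ha.1).fun_sub (hφ j a ha.2)
      filter_upwards [continuous_subtype_val.continuousAt.eventually
        (hopen.mem_nhds ⟨hi, hj⟩)] with y hy
      exact hopen.is_const_of_fderiv_eq_zero (𝕜 := ℝ) (f := fun y => φ i y - φ j y)
        ((convex_ball _ _).inter (convex_ball _ _)).isPreconnected
        (fun a ha => (hder a ha).differentiableAt.differentiableWithinAt)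
        (fun a ha => (hder a ha).fderiv) hy ⟨hi, hj⟩)
  classical
  refine ⟨fun p => if h : p ∈ Ω then u ⟨p, h⟩ else 0, fun p hp => ?_⟩
  have hd := (hφ ⟨p, hp⟩ p (Metric.mem_ball_self (hr _))).add_const (u ⟨p, hp⟩ - φ ⟨p, hp⟩ p)
  refine hd.congr_of_eventuallyEq ?_
  have h1 := hu ⟨p, hp⟩
  rw [nhds_subtype_eq_comap, Filter.eventually_comap] at h1
  filter_upwards [h1, hΩ.mem_nhds hp] with q hq hqΩ
  simp only [hqΩ, dif_pos]
  exact hq ⟨q, hqΩ⟩ rfl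

/-- The bracket acts on functions as the commutator: `⟨dφ, [Y,X]⟩ = L_Y(L_X φ) - L_X(L_Y φ)`. -/
theorem fderiv_lieBracketVF {X Y : (Fin 3 → ℝ) → (Fin 3 → ℝ)} {φ : (Fin 3 → ℝ) → ℝ}
    {p : Fin 3 → ℝ} (hX : DifferentiableAt ℝ X p) (hY : DifferentiableAt ℝ Y p)
    (hφ : ContDiffAt ℝ 2 φ p) :
    fderiv ℝ φ p (lieBracketVF Y X p) =
      lieDerivVF Y (lieDerivVF X φ) p - lieDerivVF X (lieDerivVF Y φ) p := by
  have hφ' : DifferentiableAt ℝ (fderiv ℝ φ) p :=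
    (hφ.fderiv_right (m := 1) (by norm_num)).differentiableAt (by norm_num)
  have hsymm := hφ.isSymmSndFDerivAt (by simp) (X p) (Y p)
  have e1 : fderiv ℝ (lieDerivVF X φ) p = _ :=
    (hφ'.hasFDerivAt.clm_apply hX.hasFDerivAt).fderiv
  have e2 : fderiv ℝ (lieDerivVF Y φ) p = _ :=
    (hφ'.hasFDerivAt.clm_apply hY.hasFDerivAt).fderiv
  rw [lieDerivVF, e1, lieDerivVF, e2]
  simp [lieBracketVF, hsymm]

/-- Let `Ω ⊆ ℝ³` be open and simply connected and `X, Y` smooth vector fields on `Ω`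
such that for every `p ∈ Ω` the vectors `X(p), Y(p), [X,Y](p)` form a basis of `ℝ³`.
Let `f : Ω → ℝ` be smooth and everywhere positive, and let `α` be the smooth 1-form
determined pointwise by `⟨α(p), X(p)⟩ = L_X(log f)(p)`, `⟨α(p), Y(p)⟩ = 0`,
`⟨α(p), [Y,X](p)⟩ = L_Y(L_X(log f))(p)`.  Then the following are equivalent:
(i) there exist smooth everywhere-positive functions `g, h` with `f = g·h`,
`L_X g = 0`, `L_Y h = 0` on `Ω`; (ii) `α` is closed. -/
theorem factorization_iff_closed_one_form
    (Ω : Set (Fin 3 → ℝ)) (hΩ : IsOpen Ω) (hΩsc : SimplyConnectedSpace Ω)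
    (X Y : (Fin 3 → ℝ) → (Fin 3 → ℝ))
    (hX : ContDiffOn ℝ (⊤ : ℕ∞) X Ω) (hY : ContDiffOn ℝ (⊤ : ℕ∞) Y Ω)
    (hbasis : ∀ p ∈ Ω, LinearIndependent ℝ ![X p, Y p, lieBracketVF X Y p] ∧
      Submodule.span ℝ {X p, Y p, lieBracketVF X Y p} = ⊤)
    (f : (Fin 3 → ℝ) → ℝ) (hf : ContDiffOn ℝ (⊤ : ℕ∞) f Ω) (hfpos : ∀ p ∈ Ω, 0 < f p)
    (α : (Fin 3 → ℝ) → ((Fin 3 → ℝ) →L[ℝ] ℝ)) (hα : ContDiffOn ℝ (⊤ : ℕ∞) α Ω)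
    (hαX : ∀ p ∈ Ω, α p (X p) = lieDerivVF X (fun q => Real.log (f q)) p)
    (hαY : ∀ p ∈ Ω, α p (Y p) = 0)
    (hαYX : ∀ p ∈ Ω, α p (lieBracketVF Y X p) =
      lieDerivVF Y (lieDerivVF X (fun q => Real.log (f q))) p) :
    (∃ g h : (Fin 3 → ℝ) → ℝ,
        ContDiffOn ℝ (⊤ : ℕ∞) g Ω ∧ ContDiffOn ℝ (⊤ : ℕ∞) h Ω ∧
        (∀ p ∈ Ω, 0 < g p) ∧ (∀ p ∈ Ω, 0 < h p) ∧
        (∀ p ∈ Ω, f p = g p * h p) ∧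
        (∀ p ∈ Ω, lieDerivVF X g p = 0) ∧
        (∀ p ∈ Ω, lieDerivVF Y h p = 0)) ↔
    (∀ p ∈ Ω, ∀ u w : Fin 3 → ℝ, fderiv ℝ α p u w = fderiv ℝ α p w u) := by
  constructor
  · rintro ⟨g, h, hg, hh, hgpos, hhpos, hfgh, hXg, hYh⟩ p hp
    -- On `Ω` the form `α` is `d (log h)`, whose derivative is a Hessian.
    have hlogh : ContDiffOn ℝ (⊤ : ℕ∞) (fun q => Real.log (h q)) Ω :=
      hh.log fun q hq => (hhpos q hq).ne'
    have hlogg : ContDiffOn ℝ (⊤ : ℕ∞) (fun q => Real.log (g q)) Ω :=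
      hg.log fun q hq => (hgpos q hq).ne'
    have h2top : (2 : WithTop ℕ∞) ≤ ((⊤ : ℕ∞) : WithTop ℕ∞) :=
      WithTop.coe_le_coe.2 (le_top : (2 : ℕ∞) ≤ ⊤)
    have hda : ∀ {F : Type} [NormedAddCommGroup F] [NormedSpace ℝ F] {k : (Fin 3 → ℝ) → F},
        ContDiffOn ℝ (⊤ : ℕ∞) k Ω → ∀ q ∈ Ω, DifferentiableAt ℝ k q := fun hk q hq =>
      (hk.contDiffAt (hΩ.mem_nhds hq)).differentiableAt (by simp)
    have hLY : ∀ q ∈ Ω, lieDerivVF Y (fun q => Real.log (h q)) q = 0 := by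
      intro q hq
      have := hYh q hq
      rw [lieDerivVF] at this ⊢
      rw [((hda hh q hq).hasFDerivAt.log (hhpos q hq).ne').fderiv]
      simp [this]
    have hLX : ∀ q ∈ Ω, lieDerivVF X (fun q => Real.log (f q)) q =
        lieDerivVF X (fun q => Real.log (h q)) q := by
      intro q hq
      have h1 : (fun q => Real.log (f q)) =ᶠ[𝓝 q]
          fun q => Real.log (g q) + Real.log (h q) := by
        filter_upwards [hΩ.mem_nhds hq] with y hy
        rw [hfgh y hy, Real.log_mul (hgpos y hy).ne' (hhpos y hy).ne']
      have h2 := hXg q hq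
      rw [lieDerivVF] at h2
      rw [lieDerivVF, lieDerivVF, h1.fderiv_eq, fderiv_fun_add (hda hlogg q hq) (hda hlogh q hq),
        ((hda hg q hq).hasFDerivAt.log (hgpos q hq).ne').fderiv]
      simp [h2]
    have hαeq : ∀ q ∈ Ω, α q = fderiv ℝ (fun q => Real.log (h q)) q := by
      intro q hq
      have hbr := fderiv_lieBracketVF (hda hX q hq) (hda hY q hq)
        ((hlogh.contDiffAt (hΩ.mem_nhds hq)).of_le h2top)
      have hYX : lieDerivVF Y (lieDerivVF X (fun q => Real.log (f q))) q =
          lieDerivVF Y (lieDerivVF X (fun q => Real.log (h q))) q := by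
        have : lieDerivVF X (fun q => Real.log (f q)) =ᶠ[𝓝 q]
            lieDerivVF X (fun q => Real.log (h q)) := by
          filter_upwards [hΩ.mem_nhds hq] with y hy using hLX y hy
        rw [lieDerivVF, this.fderiv_eq, lieDerivVF]
      have hXY : lieDerivVF X (lieDerivVF Y (fun q => Real.log (h q))) q = 0 := by
        have : lieDerivVF Y (fun q => Real.log (h q)) =ᶠ[𝓝 q] fun _ => 0 := by
          filter_upwards [hΩ.mem_nhds hq] with y hy using hLY y hy
        rw [lieDerivVF, this.fderiv_eq]
        simp
      have hneg : lieBracketVF X Y q = -lieBracketVF Y X q := by simp [lieBracketVF]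
      apply ContinuousLinearMap.coe_injective
      refine LinearMap.ext_on (hbasis q hq).2 ?_
      rintro v (rfl | rfl | rfl)
      · exact (hαX q hq).trans (hLX q hq)
      · exact (hαY q hq).trans (hLY q hq).symm
      · simp only [ContinuousLinearMap.coe_coe, hneg, map_neg]
        rw [hαYX q hq, hbr, hYX, hXY, sub_zero]
    have hev : α =ᶠ[𝓝 p] fderiv ℝ (fun q => Real.log (h q)) := by
      filter_upwards [hΩ.mem_nhds hp] with y hy using hαeq y hy
    intro u w
    rw [hev.fderiv_eq]
    exact (hlogh.contDiffAt (hΩ.mem_nhds hp)).isSymmSndFDerivAt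
      (by simpa using h2top) u w
  · intro hclosed
    obtain ⟨u, hu⟩ := exists_primitive_of_closed hΩ hΩsc
      (hα.differentiableOn (by simp)) hclosed
    have hus : ContDiffOn ℝ (⊤ : ℕ∞) u Ω :=
      (contDiffOn_infty_iff_fderiv_of_isOpen hΩ).2
        ⟨fun p hp => (hu p hp).differentiableAt.differentiableWithinAt,
          hα.congr fun p hp => (hu p hp).fderiv⟩
    -- With `α = du`, the factors are `h = exp u` and `g = f * exp (-u)`.
    refine ⟨fun p => f p * Real.exp (-u p), fun p => Real.exp (u p), hf.mul hus.neg.exp, hus.exp,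
      fun p hp => mul_pos (hfpos p hp) (Real.exp_pos _), fun p _ => Real.exp_pos _, fun p _ => ?_,
      fun p hp => ?_, fun p hp => ?_⟩
    · rw [mul_assoc, ← Real.exp_add]
      simp
    · have hfd : HasFDerivAt f (fderiv ℝ f p) p :=
        ((hf.contDiffAt (hΩ.mem_nhds hp)).differentiableAt (by simp)).hasFDerivAt
      have h1 := hαX p hp
      rw [lieDerivVF, (hfd.log (hfpos p hp).ne').fderiv] at h1
      have hf0 := (hfpos p hp).ne'
      rw [lieDerivVF, (hfd.fun_mul (hu p hp).fun_neg.exp).fderiv]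
      simp only [smul_apply, add_apply, neg_apply, smul_eq_mul, h1]
      field_simp
      ring
    · rw [lieDerivVF, (hu p hp).exp.fderiv]
      simp [hαY p hp]
end

section
/- Let α : U → Λᵖ((ℝ^d)*) be a C¹ p-form on U such that ι_{e_d} α_x = 0 for all x ∈ U, ι_{e_d} (dα)_x = 0 for all x ∈ U, and α_{(s,0)}(v₁,…,v_p) = 0 for every s ∈ S and all vectors v₁,…,v_p ∈ ℝ^{d−1} × {0}. Then α = 0 on U. -/
/-!
Since `ι_e α = 0` on `U` (with `e = (0,1)`), every term of `(dα)(e, w)` except the one that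
differentiates along `e` is the derivative of a function vanishing on the open set `U`. Hence
`ι_e dα = 0` says that each coefficient `y ↦ α y w` has zero derivative along `e`
(`fderiv_vertical_eq_zero`), so it is constant on the vertical slices, which are connected and
meet the cut `S × {0}`. On the cut, splitting every argument into its horizontal part plus a
multiple of `e` reduces the vanishing of `α` to the boundary condition (`eq_zero_of_horizontal`).
-/

open Set

/-- The exterior derivative of a `p`-form `α` (a map into alternating `p`-forms on
`E = ℝ^{d-1} × ℝ`), given by the usual formula
`(dα)_x(v₀,…,v_p) = Σᵢ (−1)ⁱ (Dα(x)vᵢ)(v₀,…,v̂ᵢ,…,v_p)`. -/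
noncomputable def extDer {n p : ℕ} (α : ((Fin n → ℝ) × ℝ) →
    (((Fin n → ℝ) × ℝ) [⋀^Fin p]→ₗ[ℝ] ℝ)) (x : (Fin n → ℝ) × ℝ)
    (v : Fin (p + 1) → ((Fin n → ℝ) × ℝ)) : ℝ :=
  ∑ i : Fin (p + 1),
    (-1 : ℝ) ^ (i : ℕ) * fderiv ℝ (fun y => α y fun j => v (i.succAbove j)) x (v i)

/-- An alternating form annihilated by inserting `e` in the first slot vanishes as soon as any
argument is a multiple of `e`. -/
lemma alternating_eq_zero_of_arg {E : Type*} [AddCommGroup E] [Module ℝ E] {k : ℕ}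
    (f : E [⋀^Fin (k + 1)]→ₗ[ℝ] ℝ) (e : E) (hf : ∀ w : Fin k → E, f (Fin.cons e w) = 0)
    (u : Fin (k + 1) → E) (i : Fin (k + 1)) (c : ℝ) (hu : u i = c • e) : f u = 0 := by
  have h1 : ∀ v : Fin (k + 1) → E, v i = e → f v = 0 := by
    intro v hv
    have h2 := f.map_perm v (Equiv.swap 0 i)
    have h3 : v ∘ Equiv.swap 0 i = Fin.cons e (Fin.tail (v ∘ Equiv.swap 0 i)) := by
      conv_lhs => rw [← Fin.cons_self_tail (v ∘ Equiv.swap 0 i)]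
      simp [hv]
    rw [h3, hf] at h2
    exact (smul_eq_zero_iff_eq _).mp h2.symm
  have h4 : u = Function.update u i (c • e) := by rw [← hu, Function.update_eq_self]
  rw [h4, f.map_update_smul, h1 _ (by simp), smul_zero]

/-- A form annihilated by inserting `(0,1)` vanishes if it vanishes on horizontal vectors: expand
each argument as a horizontal vector plus a multiple of `(0,1)`. -/
lemma eq_zero_of_horizontal {n k : ℕ}
    (f : ((Fin n → ℝ) × ℝ) [⋀^Fin (k + 1)]→ₗ[ℝ] ℝ)
    (hf : ∀ w : Fin k → ((Fin n → ℝ) × ℝ), f (Fin.cons ((0 : Fin n → ℝ), (1 : ℝ)) w) = 0)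
    (hh : ∀ v : Fin (k + 1) → (Fin n → ℝ), f (fun i => (v i, (0 : ℝ))) = 0)
    (w : Fin (k + 1) → ((Fin n → ℝ) × ℝ)) : f w = 0 := by
  have hw : w = (fun i => ((w i).1, (0 : ℝ))) +
      (fun i => (w i).2 • ((0 : Fin n → ℝ), (1 : ℝ))) := by
    funext i
    ext <;> simp
  rw [hw]
  refine (f.toMultilinearMap.map_add_univ _ _).trans (Finset.sum_eq_zero fun s _ => ?_)
  by_cases hs : s = Finset.univ
  · subst hs
    rw [Finset.piecewise_univ]
    exact hh fun i => (w i).1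
  · obtain ⟨i, hi⟩ : ∃ i, i ∉ s := by
      by_contra! h
      exact hs (Finset.eq_univ_of_forall h)
    exact alternating_eq_zero_of_arg f _ hf _ i (w i).2 (Finset.piecewise_eq_of_notMem _ _ _ hi)

lemma fderiv_vertical_eq_zero {n k : ℕ} {U : Set ((Fin n → ℝ) × ℝ)} (hU : IsOpen U)
    (α : ((Fin n → ℝ) × ℝ) → (((Fin n → ℝ) × ℝ) [⋀^Fin (k + 1)]→ₗ[ℝ] ℝ))
    (hια : ∀ x ∈ U, ∀ w : Fin k → ((Fin n → ℝ) × ℝ),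
      α x (Fin.cons ((0 : Fin n → ℝ), (1 : ℝ)) w) = 0)
    (hιdα : ∀ x ∈ U, ∀ w : Fin (k + 1) → ((Fin n → ℝ) × ℝ),
      extDer α x (Fin.cons ((0 : Fin n → ℝ), (1 : ℝ)) w) = 0)
    {x : (Fin n → ℝ) × ℝ} (hx : x ∈ U) (w : Fin (k + 1) → ((Fin n → ℝ) × ℝ)) :
    fderiv ℝ (fun y => α y w) x ((0 : Fin n → ℝ), (1 : ℝ)) = 0 := by
  have h := hιdα x hx w
  rw [extDer, Fin.sum_univ_succ, Finset.sum_eq_zero, add_zero] at h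
  · simpa using h
  · intro j _
    -- Omitting the slot `j + 1` leaves `(0,1)` in slot `0`, so this coefficient vanishes on `U`.
    have h0 : (fun y => α y fun l => (Fin.cons ((0 : Fin n → ℝ), (1 : ℝ)) w :
        Fin (k + 2) → ((Fin n → ℝ) × ℝ)) (j.succ.succAbove l)) =ᶠ[nhds x] fun _ => (0 : ℝ) := by
      filter_upwards [hU.mem_nhds hx] with y hy
      exact alternating_eq_zero_of_arg (α y) _ (hια y hy) _ 0 1 (by simp)
    rw [h0.fderiv_eq]
    simp

/-- **Uniqueness in Proposition 2 of the paper** (straightened local model, where the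
vector field `X` is `e_d = (0,1)` and the cut is `S × {0}`).  Let `d ≥ 2` (`d = n+1`),
`1 ≤ p ≤ d−1` (`p = k+1`), `S ⊆ ℝ^{d−1}` open, and `U ⊆ ℝ^{d−1} × ℝ` open with slices
over `S` being open intervals containing `0`.  If a `C¹` `p`-form `α` on `U` satisfies
`ι_{e_d} α = 0` and `ι_{e_d} (dα) = 0` on `U` and vanishes on `S × {0}` in the
horizontal directions `ℝ^{d−1} × {0}`, then `α = 0` on `U`. -/
theorem foliation_cut_uniqueness
    (n k : ℕ) (hn : 1 ≤ n) (hp : k + 1 ≤ n)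
    (S : Set (Fin n → ℝ)) (hS : IsOpen S)
    (U : Set ((Fin n → ℝ) × ℝ)) (hUopen : IsOpen U)
    (hUproj : ∀ q ∈ U, q.1 ∈ S)
    (hUslice : ∀ s ∈ S, (0 : ℝ) ∈ {t : ℝ | (s, t) ∈ U} ∧
      ({t : ℝ | (s, t) ∈ U}).OrdConnected)
    (α : ((Fin n → ℝ) × ℝ) → (((Fin n → ℝ) × ℝ) [⋀^Fin (k + 1)]→ₗ[ℝ] ℝ))
    (hα : ∀ w : Fin (k + 1) → ((Fin n → ℝ) × ℝ), ContDiffOn ℝ 1 (fun x => α x w) U)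
    (hια : ∀ x ∈ U, ∀ w : Fin k → ((Fin n → ℝ) × ℝ),
      α x (Fin.cons ((0 : Fin n → ℝ), (1 : ℝ)) w) = 0)
    (hιdα : ∀ x ∈ U, ∀ w : Fin (k + 1) → ((Fin n → ℝ) × ℝ),
      extDer α x (Fin.cons ((0 : Fin n → ℝ), (1 : ℝ)) w) = 0)
    (hbdry : ∀ s ∈ S, ∀ v : Fin (k + 1) → (Fin n → ℝ),
      α (s, 0) (fun i => (v i, (0 : ℝ))) = 0) :
    ∀ x ∈ U, α x = 0 := by
  rintro ⟨s, t⟩ hx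
  ext w
  have hs : s ∈ S := hUproj _ hx
  obtain ⟨h0, hI⟩ := hUslice s hs
  have hIopen : IsOpen {t : ℝ | (s, t) ∈ U} := hUopen.preimage (by fun_prop)
  have hd : ∀ r ∈ {t : ℝ | (s, t) ∈ U}, HasDerivAt (fun r => α (s, r) w) 0 r := by
    intro r hr
    have h1 : HasFDerivAt (fun y => α y w) (fderiv ℝ (fun y => α y w) (s, r)) (s, r) :=
      (((hα w).differentiableOn one_ne_zero).differentiableAt
        (hUopen.mem_nhds hr)).hasFDerivAt
    have h2 : HasDerivAt (fun r : ℝ => (s, r)) ((0 : Fin n → ℝ), (1 : ℝ)) r :=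
      (hasDerivAt_const r s).prodMk (hasDerivAt_id r)
    have h3 := h1.comp_hasDerivAt r h2
    rwa [fderiv_vertical_eq_zero hUopen α hια hιdα hr w] at h3
  have hconst : α (s, t) w = α (s, 0) w :=
    hIopen.is_const_of_deriv_eq_zero hI.isPreconnected
      (fun r hr => (hd r hr).differentiableAt.differentiableWithinAt)
      (fun r hr => (hd r hr).deriv) hx h0
  rw [hconst]
  exact eq_zero_of_horizontal (α (s, 0)) (hια _ h0) (hbdry s hs) w
end

section
/- Let β be a smooth p-form on U with ι_{e_d} β_x = 0 for all x ∈ U, let γ be a smooth (p−1)-form on U with ι_{e_d} γ_x = 0 for all x ∈ U, and let δ : S → Λᵖ((ℝ^d)*) be a smooth map. Then there exists exactly one smooth p-form α on U such that ι_{e_d} (dα)_x = β_x for all x ∈ U, ι_{e_d} α_x = γ_x for all x ∈ U, and α_{(s,0)}(v₁,…,v_p) = δ_s(v₁,…,v_p) for every s ∈ S and all vectors v₁,…,v_p ∈ ℝ^{d−1} × {0}. -/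
/-!
Write `t` for the last coordinate and `e_d = (0, 1)`. When `ι_{e_d} α = γ`, Cartan's formula for
the constant field `e_d` (`extDer_cons`) turns `ι_{e_d} dα = β` into the family of ordinary
differential equations `∂ₜ α(w) = β(w) + (dγ)(w)`, one for each tuple `w`. On the cut `t = 0`, the
values of `ι_{e_d} α` and of `α` on horizontal vectors determine `α`
(`alternating_eq_zero_of_horizontal`), and a function on `U` is determined by its `t`-derivative and
its values on the cut (`eqOn_of_fderiv_eq`); this gives uniqueness.

For existence, put
`α_{(s,t)}(w) = δ_s(π w) + (dt ∧ γ_{(s,0)})(w) + ∫₀ᵗ (β + dγ)_{(s,r)}(w) dr`,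
where `π` is the projection to `ℝ^{d-1} × {0}`. It is smooth by `contDiffOn_primitive`. The equation
`ι_{e_d} α = γ` holds on the cut by construction, and it propagates to `U` since both sides have the
same `t`-derivative: `ι_{e_d} β = 0` and `ι_{e_d} dγ = ∂ₜ γ` (`extDer_cons_of_horizontal`).
-/

open Set

open scoped ContDiff Topology

/-! ### Smooth primitives along the last coordinate -/

/-- Smooth dependence on parameters of an integral over `[0, 1]`. Locally in the parameter, the
integrand may be multiplied by a bump function equal to `1` on `[0, 1]` and supported in the slices
of `V`; the integral then becomes the value at `0` of the convolution of an indicator function with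
a smooth compactly supported family. -/
theorem contDiffAt_integral_unit {H : Type*} [NormedAddCommGroup H] [NormedSpace ℝ H]
    {V : Set (H × ℝ)} (hV : IsOpen V) {F : H × ℝ → ℝ} (hF : ContDiffOn ℝ ∞ F V) {x₀ : H}
    (hx₀ : ∀ u ∈ Icc (0 : ℝ) 1, (x₀, u) ∈ V) :
    ContDiffAt ℝ ∞ (fun x => ∫ u in (0 : ℝ)..1, F (x, u)) x₀ := by
  obtain ⟨A, B, hA, hB, hxA, hIB, hAB⟩ := generalized_tube_lemma (s := {x₀}) (t := Icc (0 : ℝ) 1)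
    isCompact_singleton isCompact_Icc hV (by
      rintro ⟨x, u⟩ ⟨hx, hu⟩
      rw [mem_singleton_iff] at hx
      subst hx
      exact hx₀ u hu)
  obtain ⟨ε, hε, hεB⟩ := (isCompact_Icc (a := (0 : ℝ)) (b := 1)).exists_cthickening_subset_open
    hB hIB
  let χ : ContDiffBump (1 / 2 : ℝ) := ⟨1 / 2, 1 / 2 + ε, by norm_num, by linarith⟩
  have hχ1 : ∀ u ∈ Icc (0 : ℝ) 1, χ u = 1 := by
    intro u hu
    apply χ.one_of_mem_closedBall
    rw [Metric.mem_closedBall, Real.dist_eq, abs_le]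
    constructor <;> simp only [χ] <;> linarith [hu.1, hu.2]
  have hχB : tsupport χ ⊆ B := by
    rw [χ.tsupport_eq]
    refine Subset.trans ?_ hεB
    intro u hu
    rw [Metric.mem_closedBall, Real.dist_eq, abs_le] at hu
    have h1 : -(1 / 2 + ε) ≤ u - 1 / 2 := hu.1
    have h2 : u - 1 / 2 ≤ 1 / 2 + ε := hu.2
    refine Metric.mem_cthickening_of_dist_le u (max 0 (min u 1)) ε _
      ⟨le_max_left _ _, max_le zero_le_one (min_le_right _ _)⟩ ?_
    rw [Real.dist_eq, abs_le]
    rcases le_total u 1 with h | h <;> rcases le_total 0 u with h' | h' <;>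
      simp [h, h'] <;> (try constructor) <;> linarith
  let g : H → ℝ → ℝ := fun x y => χ (-y) * F (x, -y)
  have hg : ContDiffOn ℝ ∞ ↿g (A ×ˢ univ) := by
    rintro ⟨x, y⟩ ⟨hx, -⟩
    apply ContDiffAt.contDiffWithinAt
    by_cases hy : -y ∈ tsupport χ
    · have hFx : ContDiffAt ℝ ∞ F (x, -y) :=
        hF.contDiffAt (hV.mem_nhds (hAB ⟨hx, hχB hy⟩))
      have h1 : ContDiffAt ℝ ∞ (fun q : H × ℝ => F (q.1, -q.2)) (x, y) :=
        ContDiffAt.comp (x, y) (g := F) (f := fun q : H × ℝ => (q.1, -q.2)) hFx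
          (contDiffAt_fst.prodMk contDiffAt_snd.neg)
      have h2 : ContDiffAt ℝ ∞ (fun q : H × ℝ => χ (-q.2)) (x, y) :=
        ContDiffAt.comp (x, y) (g := χ) (f := fun q : H × ℝ => -q.2) χ.contDiffAt
          contDiffAt_snd.neg
      exact h2.mul h1
    · have h0 : ↿g =ᶠ[𝓝 (x, y)] fun _ => 0 := by
        have hc : ContinuousAt (fun q : H × ℝ => -q.2) (x, y) := by fun_prop
        filter_upwards [hc.preimage_mem_nhds
          ((isClosed_tsupport χ).isOpen_compl.mem_nhds hy)] with q hq
        have : χ (-q.2) = 0 := image_eq_zero_of_notMem_tsupport hq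
        simp [g, Function.HasUncurry.uncurry, this]
      exact contDiffAt_const.congr_of_eventuallyEq h0
  have hconv := MeasureTheory.contDiffOn_convolution_right_with_param_comp (n := ⊤)
    (μ := MeasureTheory.volume) (ContinuousLinearMap.mul ℝ ℝ)
    (v := fun _ : H => (0 : ℝ)) (f := indicator (Ioc (0 : ℝ) 1) fun _ => (1 : ℝ)) (g := g)
    (k := (fun y : ℝ => -y) ⁻¹' tsupport χ) contDiffOn_const hA
    ((Homeomorph.neg ℝ).isClosedEmbedding.isCompact_preimage χ.hasCompactSupport)
    (by
      intro p y _ hy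
      have : χ (-y) = 0 := image_eq_zero_of_notMem_tsupport hy
      simp [g, this])
    ((MeasureTheory.integrable_indicator_iff measurableSet_Ioc).2
      (by simp [MeasureTheory.IntegrableOn])).locallyIntegrable hg
  have hA' : A ∈ 𝓝 x₀ := hA.mem_nhds (hxA rfl)
  refine (hconv.contDiffAt hA').congr_of_eventuallyEq (Filter.Eventually.of_forall fun x => ?_)
  simp only [MeasureTheory.convolution, g, ContinuousLinearMap.mul_apply']
  rw [intervalIntegral.integral_of_le zero_le_one,
    ← MeasureTheory.integral_indicator measurableSet_Ioc]
  congr 1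
  ext u
  by_cases hu : u ∈ Ioc (0 : ℝ) 1
  · simp [hu, hχ1 u ⟨hu.1.le, hu.2⟩]
  · simp [hu]

/-- The primitive `(s, t) ↦ ∫₀ᵗ F(s, r) dr` of a smooth function is smooth, because it equals
`t ∫₀¹ F(s, t u) du`. -/
theorem contDiffOn_primitive {H : Type*} [NormedAddCommGroup H] [NormedSpace ℝ H]
    {U : Set (H × ℝ)} (hU : IsOpen U)
    (hseg : ∀ x ∈ U, ∀ r ∈ uIcc 0 x.2, (x.1, r) ∈ U)
    {F : H × ℝ → ℝ} (hF : ContDiffOn ℝ ∞ F U) :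
    ContDiffOn ℝ ∞ (fun x : H × ℝ => ∫ r in (0 : ℝ)..x.2, F (x.1, r)) U := by
  have hφ : ContDiff ℝ ∞ (fun q : (H × ℝ) × ℝ => (q.1.1, q.1.2 * q.2)) := by fun_prop
  intro x hx
  have key : ContDiffAt ℝ ∞ (fun y : H × ℝ => ∫ u in (0 : ℝ)..1, F (y.1, y.2 * u)) x := by
    refine contDiffAt_integral_unit (hU.preimage hφ.continuous)
      (F := fun q => F (q.1.1, q.1.2 * q.2))
      (hF.comp hφ.contDiffOn (mapsTo_preimage _ _)) ?_
    intro u hu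
    refine hseg x hx _ ?_
    rcases le_total 0 x.2 with h | h
    · rw [uIcc_of_le h]
      exact ⟨mul_nonneg h hu.1, by nlinarith [hu.2]⟩
    · rw [uIcc_of_ge h]
      exact ⟨by nlinarith [hu.2], by nlinarith [hu.1]⟩
  refine ((contDiffAt_snd.mul key).congr_of_eventuallyEq
    (Filter.Eventually.of_forall fun y => ?_)).contDiffWithinAt
  have := intervalIntegral.mul_integral_comp_mul_left (a := 0) (b := 1)
    (f := fun r => F (y.1, r)) y.2
  simpa using this.symm

theorem hasDerivAt_slice {H : Type*} [NormedAddCommGroup H] [NormedSpace ℝ H]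
    {f : H × ℝ → ℝ} {s : H} {t : ℝ} (hf : DifferentiableAt ℝ f (s, t)) :
    HasDerivAt (fun r => f (s, r)) (fderiv ℝ f (s, t) (0, 1)) t := by
  have h : HasDerivAt (fun r : ℝ => (s, r)) ((0 : H), (1 : ℝ)) t :=
    (hasDerivAt_const t s).prodMk (hasDerivAt_id t)
  exact hf.hasFDerivAt.comp_hasDerivAt t h

theorem fderiv_primitive {H : Type*} [NormedAddCommGroup H] [NormedSpace ℝ H]
    {U : Set (H × ℝ)} (hU : IsOpen U)
    (hseg : ∀ x ∈ U, ∀ r ∈ uIcc 0 x.2, (x.1, r) ∈ U)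
    {F : H × ℝ → ℝ} (hF : ContDiffOn ℝ ∞ F U) {x : H × ℝ} (hx : x ∈ U) :
    fderiv ℝ (fun x : H × ℝ => ∫ r in (0 : ℝ)..x.2, F (x.1, r)) x (0, 1) = F x := by
  obtain ⟨s, t⟩ := x
  have hd : DifferentiableAt ℝ (fun x : H × ℝ => ∫ r in (0 : ℝ)..x.2, F (x.1, r)) (s, t) :=
    ((contDiffOn_primitive hU hseg hF).contDiffAt (hU.mem_nhds hx)).differentiableAt (by simp)
  have hslice : ContinuousOn (fun r => F (s, r)) ((fun r => (s, r)) ⁻¹' U) :=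
    hF.continuousOn.comp (by fun_prop) (mapsTo_preimage _ _)
  have hopen : IsOpen ((fun r : ℝ => (s, r)) ⁻¹' U) := hU.preimage (by fun_prop)
  have h2 : HasDerivAt (fun v => ∫ r in (0 : ℝ)..v, F (s, r)) (F (s, t)) t :=
    intervalIntegral.integral_hasDerivAt_right
      ((hslice.mono fun r hr => hseg _ hx r hr).intervalIntegrable)
      (hslice.stronglyMeasurableAtFilter hopen t hx)
      (hslice.continuousAt (hopen.mem_nhds hx))
  exact (hasDerivAt_slice hd).unique h2

/-- A smooth function on `U` is determined by its `t`-derivative and its values at `t = 0`. -/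
theorem eqOn_of_fderiv_eq {H : Type*} [NormedAddCommGroup H] [NormedSpace ℝ H]
    {U : Set (H × ℝ)} (hU : IsOpen U)
    (hseg : ∀ x ∈ U, ∀ r ∈ uIcc 0 x.2, (x.1, r) ∈ U)
    {f g : H × ℝ → ℝ} (hf : ContDiffOn ℝ ∞ f U) (hg : ContDiffOn ℝ ∞ g U)
    (hfg : ∀ x ∈ U, fderiv ℝ f x (0, 1) = fderiv ℝ g x (0, 1))
    (h0 : ∀ x ∈ U, f (x.1, 0) = g (x.1, 0)) {x : H × ℝ} (hx : x ∈ U) : f x = g x := by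
  obtain ⟨s, t⟩ := x
  have hd : ∀ {φ : H × ℝ → ℝ}, ContDiffOn ℝ ∞ φ U → ∀ {y}, y ∈ U → DifferentiableAt ℝ φ y :=
    fun h _ hy => (h.contDiffAt (hU.mem_nhds hy)).differentiableAt (by simp)
  have hder : ∀ r ∈ uIcc 0 t, HasDerivAt (fun r => f (s, r) - g (s, r)) 0 r := by
    intro r hr
    have hr' := hseg _ hx r hr
    have := (hasDerivAt_slice (hd hf hr')).sub (hasDerivAt_slice (hd hg hr'))
    rwa [hfg _ hr', sub_self] at this
  have hint := intervalIntegral.integral_eq_sub_of_hasDerivAt hder (by simp)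
  have h00 := h0 _ hx
  simp only [intervalIntegral.integral_zero] at hint
  simp only at h00
  linarith

/-! ### Alternating forms and the exterior derivative -/

/-- An alternating form vanishes if its interior product with `e_d` and its restriction to
`ℝ^{d-1} × {0}` do: the arguments may be replaced one at a time by their horizontal parts. -/
theorem alternating_eq_zero_of_horizontal {n k : ℕ}
    (η : ((Fin n → ℝ) × ℝ) [⋀^Fin (k + 1)]→ₗ[ℝ] ℝ)
    (hι : ∀ w, η (Fin.cons ((0 : Fin n → ℝ), (1 : ℝ)) w) = 0)
    (hh : ∀ v : Fin (k + 1) → (Fin n → ℝ), η (fun i => (v i, (0 : ℝ))) = 0) : η = 0 := by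
  have hupd : ∀ (w : Fin (k + 1) → (Fin n → ℝ) × ℝ) (i : Fin (k + 1)),
      η (Function.update w i (0, 1)) = 0 := by
    intro w i
    have h := η.map_insertNth i (0, 1) (i.removeNth w)
    rw [Fin.insertNth_removeNth] at h
    rw [h]
    exact smul_eq_zero_of_right _ (hι _)
  ext w
  have key : ∀ s : Finset (Fin (k + 1)),
      η (fun i => if i ∈ s then ((w i).1, (0 : ℝ)) else w i) = η w := by
    intro s
    induction s using Finset.induction_on with
    | empty => simp
    | insert a s ha ih =>
      rw [← ih]
      set u : Fin (k + 1) → (Fin n → ℝ) × ℝ :=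
        fun i => if i ∈ s then ((w i).1, (0 : ℝ)) else w i with hu
      have h1 : u = Function.update u a
          (((w a).1, (0 : ℝ)) + (w a).2 • ((0 : Fin n → ℝ), (1 : ℝ))) := by
        rw [eq_comm, Function.update_eq_self_iff]
        simp [hu, ha]
      have h2 : (fun i => if i ∈ insert a s then ((w i).1, (0 : ℝ)) else w i) =
          Function.update u a ((w a).1, (0 : ℝ)) := by
        ext1 i
        by_cases hi : i = a
        · subst hi; simp
        · simp [hu, hi]
      rw [h2]
      conv_rhs => rw [h1]
      rw [η.map_update_add, η.map_update_smul, hupd, smul_zero, add_zero]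
  rw [← key Finset.univ]
  simpa using hh fun i => (w i).1

/-- Cartan's formula for the constant field `e_d`: if `ι_{e_d} α = γ` on `U`, then
`ι_{e_d} dα = ∂ₜ α - dγ`. -/
theorem extDer_cons {n k : ℕ} {U : Set ((Fin n → ℝ) × ℝ)} (hU : IsOpen U)
    {α : ((Fin n → ℝ) × ℝ) → (((Fin n → ℝ) × ℝ) [⋀^Fin (k + 1)]→ₗ[ℝ] ℝ)}
    {γ : ((Fin n → ℝ) × ℝ) → (((Fin n → ℝ) × ℝ) [⋀^Fin k]→ₗ[ℝ] ℝ)}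
    (hαγ : ∀ x ∈ U, ∀ w : Fin k → ((Fin n → ℝ) × ℝ),
      α x (Fin.cons ((0 : Fin n → ℝ), (1 : ℝ)) w) = γ x w)
    {x : (Fin n → ℝ) × ℝ} (hx : x ∈ U) (w : Fin (k + 1) → ((Fin n → ℝ) × ℝ)) :
    extDer α x (Fin.cons ((0 : Fin n → ℝ), (1 : ℝ)) w) =
      fderiv ℝ (fun y => α y w) x (0, 1) - extDer γ x w := by
  rw [extDer, Fin.sum_univ_succ, extDer, sub_eq_add_neg, ← Finset.sum_neg_distrib]
  congr 1
  · simp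
  · refine Finset.sum_congr rfl fun i _ => ?_
    have hw : ∀ i : Fin (k + 1), (fun j => (Fin.cons ((0 : Fin n → ℝ), (1 : ℝ)) w :
        Fin (k + 2) → (Fin n → ℝ) × ℝ) (i.succ.succAbove j)) =
        Fin.cons ((0 : Fin n → ℝ), (1 : ℝ)) (fun j => w (i.succAbove j)) := by
      intro i
      ext1 j
      refine Fin.cases ?_ (fun j => ?_) j <;> simp
    have he : (fun y => α y fun j => (Fin.cons ((0 : Fin n → ℝ), (1 : ℝ)) w :
        Fin (k + 2) → (Fin n → ℝ) × ℝ) (i.succ.succAbove j)) =ᶠ[𝓝 x]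
        fun y => γ y fun j => w (i.succAbove j) := by
      filter_upwards [hU.mem_nhds hx] with y hy
      rw [hw, hαγ y hy]
    rw [he.fderiv_eq]
    simp [pow_succ]

/-- Omitting an entry other than the first from `(e_d, w)` leaves a tuple that contains `e_d`. -/
theorem cons_succAbove_eq {n k : ℕ} (w : Fin k → ((Fin n → ℝ) × ℝ)) (i : Fin k) :
    ∃ j : Fin k, (Fin.cons ((0 : Fin n → ℝ), (1 : ℝ)) w : Fin (k + 1) → (Fin n → ℝ) × ℝ)
      (i.succ.succAbove j) = (0, 1) := by
  obtain ⟨m, rfl⟩ : ∃ m, k = m + 1 := ⟨k - 1, by have := i.pos; omega⟩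
  exact ⟨0, by simp⟩

/-- If `ι_{e_d} γ = 0` on `U`, then `ι_{e_d} dγ = ∂ₜ γ`. -/
theorem extDer_cons_of_horizontal {n k : ℕ} {U : Set ((Fin n → ℝ) × ℝ)} (hU : IsOpen U)
    {γ : ((Fin n → ℝ) × ℝ) → (((Fin n → ℝ) × ℝ) [⋀^Fin k]→ₗ[ℝ] ℝ)}
    (hιγ : ∀ x ∈ U, ∀ w : Fin k → ((Fin n → ℝ) × ℝ),
      (∃ j, w j = ((0 : Fin n → ℝ), (1 : ℝ))) → γ x w = 0)
    {x : (Fin n → ℝ) × ℝ} (hx : x ∈ U) (w : Fin k → ((Fin n → ℝ) × ℝ)) :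
    extDer γ x (Fin.cons ((0 : Fin n → ℝ), (1 : ℝ)) w) =
      fderiv ℝ (fun y => γ y w) x (0, 1) := by
  rw [extDer, Fin.sum_univ_succ, Finset.sum_eq_zero, add_zero]
  · simp
  · intro i _
    have he : (fun y => γ y fun j => (Fin.cons ((0 : Fin n → ℝ), (1 : ℝ)) w :
        Fin (k + 1) → (Fin n → ℝ) × ℝ) (i.succ.succAbove j)) =ᶠ[𝓝 x] fun _ => 0 := by
      filter_upwards [hU.mem_nhds hx] with y hy
      exact hιγ y hy _ (cons_succAbove_eq w i)
    rw [he.fderiv_eq]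
    simp

theorem contDiffOn_extDer {n k : ℕ} {U : Set ((Fin n → ℝ) × ℝ)} (hU : IsOpen U)
    {γ : ((Fin n → ℝ) × ℝ) → (((Fin n → ℝ) × ℝ) [⋀^Fin k]→ₗ[ℝ] ℝ)}
    (hγ : ∀ w : Fin k → ((Fin n → ℝ) × ℝ), ContDiffOn ℝ ∞ (fun x => γ x w) U)
    (w : Fin (k + 1) → ((Fin n → ℝ) × ℝ)) :
    ContDiffOn ℝ ∞ (fun x => extDer γ x w) U := by
  unfold extDer
  refine ContDiffOn.sum fun i _ => contDiffOn_const.mul ?_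
  exact ((hγ _).fderiv_of_isOpen hU (m := ∞) (by simp)).clm_apply contDiffOn_const

/-- `extDer γ x` is only a function of tuples; it is an alternating form where the coefficients of
`γ` are differentiable. -/
theorem exists_alternating_extDer {n k : ℕ}
    {γ : ((Fin n → ℝ) × ℝ) → (((Fin n → ℝ) × ℝ) [⋀^Fin k]→ₗ[ℝ] ℝ)} {x : (Fin n → ℝ) × ℝ}
    (hγ : ∀ w : Fin k → ((Fin n → ℝ) × ℝ), DifferentiableAt ℝ (fun x => γ x w) x) :
    ∃ a : ((Fin n → ℝ) × ℝ) [⋀^Fin (k + 1)]→ₗ[ℝ] ℝ, ∀ w, a w = extDer γ x w := by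
  let f : ((Fin n → ℝ) × ℝ) →ₗ[ℝ] ((Fin n → ℝ) × ℝ) [⋀^Fin k]→ₗ[ℝ] ℝ :=
    { toFun := fun v =>
        { toFun := fun w => fderiv ℝ (fun y => γ y w) x v
          map_update_add' := by
            intro _ w i a b
            have := Subsingleton.elim ‹DecidableEq (Fin k)› (instDecidableEqFin k)
            subst this
            simp only [AlternatingMap.map_update_add]
            rw [fderiv_fun_add (hγ _) (hγ _)]
            rfl
          map_update_smul' := by
            intro _ w i c a
            have := Subsingleton.elim ‹DecidableEq (Fin k)› (instDecidableEqFin k)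
            subst this
            simp only [AlternatingMap.map_update_smul]
            rw [fderiv_fun_const_smul (hγ _)]
            rfl
          map_eq_zero_of_eq' := by
            intro w i j hw hij
            have : (fun y => γ y w) = fun _ => 0 := by
              ext y
              exact (γ y).map_eq_zero_of_eq w hw hij
            simp [this] }
      map_add' := by intro a b; ext w; simp
      map_smul' := by intro c a; ext w; simp }
  refine ⟨AlternatingMap.alternatizeUncurryFin f, fun w => ?_⟩
  rw [AlternatingMap.alternatizeUncurryFin_apply, extDer]
  refine Finset.sum_congr rfl fun i _ => ?_
  have hf : f (w i) (i.removeNth w) =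
      fderiv ℝ (fun y => γ y fun j => w (i.succAbove j)) x (w i) := rfl
  rw [hf, zsmul_eq_mul]
  push_cast
  rfl

theorem exists_alternating_integral {n k : ℕ} {t : ℝ}
    {θ : ℝ → (((Fin n → ℝ) × ℝ) [⋀^Fin k]→ₗ[ℝ] ℝ)}
    (hθ : ∀ w, IntervalIntegrable (fun r => θ r w) MeasureTheory.volume 0 t) :
    ∃ a : ((Fin n → ℝ) × ℝ) [⋀^Fin k]→ₗ[ℝ] ℝ, ∀ w, a w = ∫ r in (0 : ℝ)..t, θ r w := by
  refine ⟨{ toFun := fun w => ∫ r in (0 : ℝ)..t, θ r w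
            map_update_add' := ?_
            map_update_smul' := ?_
            map_eq_zero_of_eq' := ?_ }, fun w => rfl⟩
  · intro _ w i a b
    have := Subsingleton.elim ‹DecidableEq (Fin k)› (instDecidableEqFin k)
    subst this
    simp only [AlternatingMap.map_update_add]
    exact intervalIntegral.integral_add (hθ _) (hθ _)
  · intro _ w i c a
    have := Subsingleton.elim ‹DecidableEq (Fin k)› (instDecidableEqFin k)
    subst this
    simp only [AlternatingMap.map_update_smul]
    exact intervalIntegral.integral_smul _ _
  · intro w i j hw hij
    simp [fun r => (θ r).map_eq_zero_of_eq w hw hij]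

/-! ### Existence and uniqueness -/

/-- **Existence and uniqueness in Proposition 2 of the paper** (straightened local
model, where the vector field `X` is `e_d = (0,1)` and the cut is `S × {0}`).  Let
`d ≥ 2` (`d = n+1`), `1 ≤ p ≤ d−1` (`p = k+1`), `S ⊆ ℝ^{d−1}` open, and
`U ⊆ ℝ^{d−1} × ℝ` open with slices over `S` being open intervals containing `0`.
Given a smooth `p`-form `β` on `U` with `ι_{e_d} β = 0`, a smooth `(p−1)`-form `γ`
on `U` with `ι_{e_d} γ = 0`, and a smooth boundary datum `δ` on `S`, there is exactly
one smooth `p`-form `α` on `U` with `ι_{e_d} dα = β`, `ι_{e_d} α = γ` on `U` and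
`α = δ` on `S × {0}` in the horizontal directions `ℝ^{d−1} × {0}`. -/
theorem foliation_cut_existence_uniqueness
    (n k : ℕ) (hn : 1 ≤ n) (hp : k + 1 ≤ n)
    (S : Set (Fin n → ℝ)) (hS : IsOpen S)
    (U : Set ((Fin n → ℝ) × ℝ)) (hUopen : IsOpen U)
    (hUproj : ∀ q ∈ U, q.1 ∈ S)
    (hUslice : ∀ s ∈ S, (0 : ℝ) ∈ {t : ℝ | (s, t) ∈ U} ∧
      ({t : ℝ | (s, t) ∈ U}).OrdConnected)
    (β : ((Fin n → ℝ) × ℝ) → (((Fin n → ℝ) × ℝ) [⋀^Fin (k + 1)]→ₗ[ℝ] ℝ))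
    (hβ : ∀ w : Fin (k + 1) → ((Fin n → ℝ) × ℝ), ContDiffOn ℝ (⊤ : ℕ∞) (fun x => β x w) U)
    (hιβ : ∀ x ∈ U, ∀ w : Fin k → ((Fin n → ℝ) × ℝ),
      β x (Fin.cons ((0 : Fin n → ℝ), (1 : ℝ)) w) = 0)
    (γ : ((Fin n → ℝ) × ℝ) → (((Fin n → ℝ) × ℝ) [⋀^Fin k]→ₗ[ℝ] ℝ))
    (hγ : ∀ w : Fin k → ((Fin n → ℝ) × ℝ), ContDiffOn ℝ (⊤ : ℕ∞) (fun x => γ x w) U)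
    (hιγ : ∀ x ∈ U, ∀ w : Fin k → ((Fin n → ℝ) × ℝ),
      (∃ j, w j = ((0 : Fin n → ℝ), (1 : ℝ))) → γ x w = 0)
    (δ : (Fin n → ℝ) → (((Fin n → ℝ) × ℝ) [⋀^Fin (k + 1)]→ₗ[ℝ] ℝ))
    (hδ : ∀ w : Fin (k + 1) → ((Fin n → ℝ) × ℝ), ContDiffOn ℝ (⊤ : ℕ∞) (fun s => δ s w) S) :
    ∃ α : ((Fin n → ℝ) × ℝ) → (((Fin n → ℝ) × ℝ) [⋀^Fin (k + 1)]→ₗ[ℝ] ℝ),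
      ((∀ w : Fin (k + 1) → ((Fin n → ℝ) × ℝ), ContDiffOn ℝ (⊤ : ℕ∞) (fun x => α x w) U) ∧
       (∀ x ∈ U, ∀ w : Fin (k + 1) → ((Fin n → ℝ) × ℝ),
         extDer α x (Fin.cons ((0 : Fin n → ℝ), (1 : ℝ)) w) = β x w) ∧
       (∀ x ∈ U, ∀ w : Fin k → ((Fin n → ℝ) × ℝ),
         α x (Fin.cons ((0 : Fin n → ℝ), (1 : ℝ)) w) = γ x w) ∧
       (∀ s ∈ S, ∀ v : Fin (k + 1) → (Fin n → ℝ),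
         α (s, 0) (fun i => (v i, (0 : ℝ))) = δ s (fun i => (v i, (0 : ℝ))))) ∧
      ∀ α' : ((Fin n → ℝ) × ℝ) → (((Fin n → ℝ) × ℝ) [⋀^Fin (k + 1)]→ₗ[ℝ] ℝ),
        ((∀ w : Fin (k + 1) → ((Fin n → ℝ) × ℝ), ContDiffOn ℝ (⊤ : ℕ∞) (fun x => α' x w) U) ∧
         (∀ x ∈ U, ∀ w : Fin (k + 1) → ((Fin n → ℝ) × ℝ),
           extDer α' x (Fin.cons ((0 : Fin n → ℝ), (1 : ℝ)) w) = β x w) ∧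
         (∀ x ∈ U, ∀ w : Fin k → ((Fin n → ℝ) × ℝ),
           α' x (Fin.cons ((0 : Fin n → ℝ), (1 : ℝ)) w) = γ x w) ∧
         (∀ s ∈ S, ∀ v : Fin (k + 1) → (Fin n → ℝ),
           α' (s, 0) (fun i => (v i, (0 : ℝ))) = δ s (fun i => (v i, (0 : ℝ))))) →
        ∀ x ∈ U, α' x = α x := by
  have hseg : ∀ x ∈ U, ∀ r ∈ uIcc 0 x.2, (x.1, r) ∈ U := fun x hx r hr =>
    (hUslice x.1 (hUproj x hx)).2.uIcc_subset (hUslice x.1 (hUproj x hx)).1 hx hr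
  have hzero : ∀ s ∈ S, (s, (0 : ℝ)) ∈ U := fun s hs => (hUslice s hs).1
  have hdiff : ∀ {f : (Fin n → ℝ) × ℝ → ℝ}, ContDiffOn ℝ ∞ f U → ∀ {y}, y ∈ U →
      DifferentiableAt ℝ f y :=
    fun h _ hy => (h.contDiffAt (hUopen.mem_nhds hy)).differentiableAt (by simp)
  -- The value of `∂ₜ α(w)` forced by the equations, see `extDer_cons`.
  let D : ((Fin n → ℝ) × ℝ) → (Fin (k + 1) → ((Fin n → ℝ) × ℝ)) → ℝ :=
    fun x w => β x w + extDer γ x w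
  have hD : ∀ w, ContDiffOn ℝ ∞ (fun x => D x w) U := fun w =>
    (hβ w).add (contDiffOn_extDer hUopen hγ w)
  -- The value of `α` on the cut: `δ` on horizontal vectors plus `dt ∧ γ`.
  let π : ((Fin n → ℝ) × ℝ) →ₗ[ℝ] ((Fin n → ℝ) × ℝ) :=
    LinearMap.inl ℝ _ _ ∘ₗ LinearMap.fst ℝ _ _
  let α₀ : (Fin n → ℝ) → (((Fin n → ℝ) × ℝ) [⋀^Fin (k + 1)]→ₗ[ℝ] ℝ) := fun s =>
    (δ s).compLinearMap π +
      AlternatingMap.alternatizeUncurryFin ((LinearMap.snd ℝ (Fin n → ℝ) ℝ).smulRight (γ (s, 0)))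
  have hα₀_apply : ∀ s w, α₀ s w = δ s (fun i => ((w i).1, (0 : ℝ))) +
      ∑ i : Fin (k + 1), (-1 : ℝ) ^ (i : ℕ) *
        ((w i).2 * γ (s, 0) fun j => w (i.succAbove j)) := by
    intro s w
    simp only [α₀, AlternatingMap.add_apply, AlternatingMap.alternatizeUncurryFin_apply]
    congr 1
    refine Finset.sum_congr rfl fun i _ => ?_
    rw [zsmul_eq_mul]
    push_cast
    rfl
  have hα₀_smooth : ∀ w, ContDiffOn ℝ ∞ (fun x : (Fin n → ℝ) × ℝ => α₀ x.1 w) U := by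
    intro w
    simp only [hα₀_apply]
    refine ContDiffOn.add ((hδ _).comp contDiffOn_fst hUproj)
      (ContDiffOn.sum fun i _ => contDiffOn_const.mul (contDiffOn_const.mul ?_))
    exact (hγ fun j => w (i.succAbove j)).comp (contDiffOn_fst.prodMk contDiffOn_const)
      fun x hx => hzero _ (hUproj x hx)
  have hα₀_vert : ∀ s ∈ S, ∀ w : Fin k → ((Fin n → ℝ) × ℝ),
      α₀ s (Fin.cons ((0 : Fin n → ℝ), (1 : ℝ)) w) = γ (s, 0) w := by
    intro s hs w
    rw [hα₀_apply, Fin.sum_univ_succ, Finset.sum_eq_zero, (δ s).map_coord_zero 0]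
    · simp
    · simp
    · intro i _
      rw [hιγ _ (hzero s hs) _ (cons_succAbove_eq w i)]
      simp
  -- Off `U` the integrand need not be alternating, so the form is only specified on `U`.
  have hex : ∀ x, ∃ a : ((Fin n → ℝ) × ℝ) [⋀^Fin (k + 1)]→ₗ[ℝ] ℝ, x ∈ U →
      ∀ w, a w = α₀ x.1 w + ∫ r in (0 : ℝ)..x.2, D (x.1, r) w := by
    intro x
    by_cases hx : x ∈ U
    swap
    · exact ⟨0, fun h => absurd h hx⟩
    have hDalt : ∀ y, ∃ a : ((Fin n → ℝ) × ℝ) [⋀^Fin (k + 1)]→ₗ[ℝ] ℝ, y ∈ U →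
        ∀ w, a w = D y w := by
      intro y
      by_cases hy : y ∈ U
      · obtain ⟨a, ha⟩ := exists_alternating_extDer (fun w => hdiff (hγ w) hy)
        exact ⟨β y + a, fun _ w => by simp [D, ha]⟩
      · exact ⟨0, fun h => absurd h hy⟩
    choose θ hθ using hDalt
    have hθD : ∀ w, EqOn (fun r => θ (x.1, r) w) (fun r => D (x.1, r) w) (uIcc 0 x.2) :=
      fun w r hr => hθ _ (hseg x hx r hr) w
    obtain ⟨a, ha⟩ := exists_alternating_integral (t := x.2) (θ := fun r => θ (x.1, r)) (by
      intro w
      refine (ContinuousOn.congr ?_ (hθD w)).intervalIntegrable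
      exact (hD w).continuousOn.comp (by fun_prop) fun r hr => hseg x hx r hr)
    refine ⟨α₀ x.1 + a, fun _ w => ?_⟩
    rw [AlternatingMap.add_apply, ha, intervalIntegral.integral_congr (hθD w)]
  choose α hα using hex
  have hprim := fun w => contDiffOn_primitive hUopen hseg (hD w)
  have hα_smooth : ∀ w, ContDiffOn ℝ ∞ (fun x => α x w) U := fun w =>
    ((hα₀_smooth w).add (hprim w)).congr fun x hx => hα x hx w
  have hα_cut : ∀ s ∈ S, α (s, 0) = α₀ s := by
    intro s hs
    ext w
    simp [hα _ (hzero s hs)]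
  have hα_deriv : ∀ x ∈ U, ∀ w, fderiv ℝ (fun y => α y w) x (0, 1) = D x w := by
    intro x hx w
    have he : (fun y => α y w) =ᶠ[𝓝 x]
        fun y => α₀ y.1 w + ∫ r in (0 : ℝ)..y.2, D (y.1, r) w := by
      filter_upwards [hUopen.mem_nhds hx] with y hy using hα y hy w
    -- `y ↦ α₀ y.1 w` does not depend on `t`.
    have h0 : fderiv ℝ (fun y : (Fin n → ℝ) × ℝ => α₀ y.1 w) x (0, 1) = 0 :=
      (hasDerivAt_slice (s := x.1) (t := x.2) (hdiff (hα₀_smooth w) hx)).unique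
        (hasDerivAt_const x.2 (α₀ x.1 w))
    rw [he.fderiv_eq, fderiv_fun_add (hdiff (hα₀_smooth w) hx) (hdiff (hprim w) hx),
      ContinuousLinearMap.add_apply, h0, zero_add, fderiv_primitive hUopen hseg (hD w) hx]
  have hα_vert : ∀ x ∈ U, ∀ w : Fin k → ((Fin n → ℝ) × ℝ),
      α x (Fin.cons ((0 : Fin n → ℝ), (1 : ℝ)) w) = γ x w := by
    intro x hx w
    refine eqOn_of_fderiv_eq hUopen hseg (hα_smooth _) (hγ w) (fun y hy => ?_) (fun y hy => ?_) hx
    · rw [hα_deriv y hy]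
      simp only [D]
      rw [hιβ y hy, zero_add, extDer_cons_of_horizontal hUopen hιγ hy]
    · rw [hα_cut _ (hUproj y hy), hα₀_vert _ (hUproj y hy)]
  have hα_bdry : ∀ s ∈ S, ∀ v : Fin (k + 1) → (Fin n → ℝ),
      α (s, 0) (fun i => (v i, (0 : ℝ))) = δ s (fun i => (v i, (0 : ℝ))) := by
    intro s hs v
    rw [hα_cut s hs, hα₀_apply]
    simp
  refine ⟨α, ⟨hα_smooth, fun x hx w => ?_, hα_vert, hα_bdry⟩, ?_⟩
  · rw [extDer_cons hUopen hα_vert hx, hα_deriv x hx]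
    simp [D]
  · rintro α' ⟨hsm, hd, hv, hb⟩ x hx
    ext w
    refine eqOn_of_fderiv_eq hUopen hseg (hsm w) (hα_smooth w) (fun y hy => ?_) (fun y hy => ?_) hx
    · have h := hd y hy w
      rw [extDer_cons hUopen hv hy] at h
      rw [hα_deriv y hy w]
      simp only [D]
      linarith
    · have hs := hUproj y hy
      have h0 : α' (y.1, 0) - α (y.1, 0) = 0 := by
        refine alternating_eq_zero_of_horizontal _ (fun u => ?_) (fun v => ?_)
        · simp [hv _ (hzero _ hs), hα_vert _ (hzero _ hs)]
        · simp [hb _ hs, hα_bdry _ hs]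
      rw [sub_eq_zero.1 h0]
end
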